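/- The function d_J is a metric on J: it is nonnegative, symmetric, vanishes precisely when the two pairs are equal, and satisfies the triangle inequality. -/

import Mathlib

/-!
A correspondence is determined by its finite set of matched pairs, so it is convenient to replace
enumerated sequences by finite sets `S` of pairs of blocks that are pairwise comparable in the
left-to-right order (`IsFinCorr`). `JClose x y r` says that some such `S` has distortion at
most `r`, and `dJ x y` is the infimum of these `r` (`jClose_of_dJ_lt`, `dJ_le_of_jClose`). The metric
axioms then become statements about `JClose`.

* Symmetry: swap the pairs of `S`.
* `dJ x x = 0`: the blocks have total mass `‖η‖`, so finitely many of them, matched with themselves,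
  leave an arbitrarily small mass unmatched (`exists_finset_blocks`).
* Triangle inequality: compose `S` and `S'` along common middle blocks. A block `U` of `S` whose
  partner `V` is not used by `S'` becomes unmatched, at cost `Leb U ≤ |Leb U - Leb V| + Leb V`; the
  first term was already counted for `S`, and the blocks `V` are disjoint from those used by `S'`, so
  their total mass is at most the mass that `S'` leaves unmatched (`compose_sum_le`).
* Separation: if the distortion `ε` of `S` is less than `Leb U`, then `U` is matched to some `V`, and
  since the matched masses to the left and to the right of `U` nearly fill the space available, the
  endpoints of `V` are within `ε` of those of `U` (`exists_close_block`). For small `ε` any two such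
  `V` overlap, so `V` does not depend on `ε` and equals `U`. Thus the partitions agree and the
  functions agree on all blocks; blocks are dense and the functions are right-continuous, so they
  agree everywhere.
-/


open MeasureTheory Filter Topology Set

/-- An interval partition of `[0, L]`: a set of disjoint open subintervals whose
complement in `[0, L]` is Lebesgue-null. A block is encoded by its endpoint pair
`(a, b)` with `a < b`, representing the open interval `(a, b)`. -/
structure IntervalPartition where
  length : ℝ
  length_nonneg : 0 ≤ length
  blocks : Set (ℝ × ℝ)
  blocks_lt : ∀ p ∈ blocks, p.1 < p.2
  blocks_sub : ∀ p ∈ blocks, 0 ≤ p.1 ∧ p.2 ≤ length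
  blocks_disjoint : ∀ p ∈ blocks, ∀ q ∈ blocks, p ≠ q →
    Set.Ioo p.1 p.2 ∩ Set.Ioo q.1 q.2 = ∅
  compl_null : volume (Set.Icc 0 length \ ⋃ p ∈ blocks, Set.Ioo p.1 p.2) = 0

namespace IntervalPartition

/-- The mass (Lebesgue measure) of a block `(a, b)`. -/
def mass (p : ℝ × ℝ) : ℝ := p.2 - p.1

/-- The complement `C_β = [0, ‖β‖] \ ⋃_{U ∈ β} U`. -/
def cset (β : IntervalPartition) : Set ℝ :=
  Set.Icc 0 β.length \ ⋃ p ∈ β.blocks, Set.Ioo p.1 p.2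

/-- A correspondence between `β` and `γ`: a finite sequence of pairs of blocks,
strictly increasing in the left-to-right order in each coordinate. -/
def IsCorrespondence (β γ : IntervalPartition) (n : ℕ)
    (c : Fin n → (ℝ × ℝ) × (ℝ × ℝ)) : Prop :=
  (∀ j, (c j).1 ∈ β.blocks ∧ (c j).2 ∈ γ.blocks) ∧
  (∀ j k : Fin n, j < k → (c j).1.2 ≤ (c k).1.1 ∧ (c j).2.2 ≤ (c k).2.1)

/-- The Hausdorff distortion of a correspondence: the maximum of quantities
(i) and (ii) of the paper. -/
noncomputable def hausDistortion (β γ : IntervalPartition) (n : ℕ)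
    (c : Fin n → (ℝ × ℝ) × (ℝ × ℝ)) : ℝ :=
  max ((∑ j : Fin n, |mass (c j).1 - mass (c j).2|) + β.length - ∑ j : Fin n, mass (c j).1)
      ((∑ j : Fin n, |mass (c j).1 - mass (c j).2|) + γ.length - ∑ j : Fin n, mass (c j).2)

/-- The metric `d_H'`: infimum of the Hausdorff distortion over all correspondences. -/
noncomputable def dHp (β γ : IntervalPartition) : ℝ :=
  sInf {x | ∃ n, ∃ c : Fin n → (ℝ × ℝ) × (ℝ × ℝ),
    IsCorrespondence β γ n c ∧ x = hausDistortion β γ n c}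

/-- The metric `d_H`: the Hausdorff distance between the complements. -/
noncomputable def dH (β γ : IntervalPartition) : ℝ :=
  Metric.hausdorffDist β.cset γ.cset

/-- The number of blocks of mass `> h` ending at or before `t`. -/
noncomputable def divCount (β : IntervalPartition) (t h : ℝ) : ℕ :=
  Set.ncard {p : ℝ × ℝ | p ∈ β.blocks ∧ h < p.2 - p.1 ∧ p.2 ≤ t}

/-- `β` has `a`-diversity `d` at `t`:
`Γ(1-a) · lim_{h↓0} h^a · #{(x,y) ∈ β : y - x > h, y ≤ t} = d`. -/
def HasDiversity (a : ℝ) (β : IntervalPartition) (t d : ℝ) : Prop :=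
  Tendsto (fun h : ℝ => Real.Gamma (1 - a) * h ^ a * (divCount β t h : ℝ))
    (𝓝[>] 0) (𝓝 d)

/-- The `a`-diversity property: the diversity limit exists at every `t ∈ [0, ‖β‖]`. -/
def HasDiversityProp (a : ℝ) (β : IntervalPartition) : Prop :=
  ∀ t ∈ Set.Icc 0 β.length, ∃ d, HasDiversity a β t d

/-- The diversity function `𝒟_β(t)` (the value of the limit, when it exists). -/
noncomputable def diversity (a : ℝ) (β : IntervalPartition) (t : ℝ) : ℝ :=
  limUnder (𝓝[>] (0:ℝ)) (fun h : ℝ => Real.Gamma (1 - a) * h ^ a * (divCount β t h : ℝ))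

/-- The total diversity `𝒟_β(∞) = 𝒟_β(‖β‖)`. -/
noncomputable def totalDiversity (a : ℝ) (β : IntervalPartition) : ℝ :=
  diversity a β β.length

/-- The diversity `𝒟_β(U)` of a block `U`, evaluated at its midpoint. -/
noncomputable def blockDiversity (a : ℝ) (β : IntervalPartition) (p : ℝ × ℝ) : ℝ :=
  diversity a β ((p.1 + p.2) / 2)

/-- The `a`-distortion of a correspondence: the maximum of quantities (i)-(iv). -/
noncomputable def alphaDistortion (a : ℝ) (β γ : IntervalPartition) (n : ℕ)
    (c : Fin n → (ℝ × ℝ) × (ℝ × ℝ)) : ℝ :=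
  max (hausDistortion β γ n c)
    (max (⨆ j : Fin n, |blockDiversity a β (c j).1 - blockDiversity a γ (c j).2|)
         |totalDiversity a β - totalDiversity a γ|)

/-- The metric `d_α`: infimum of the `a`-distortion over all correspondences. -/
noncomputable def dA (a : ℝ) (β γ : IntervalPartition) : ℝ :=
  sInf {x | ∃ n, ∃ c : Fin n → (ℝ × ℝ) × (ℝ × ℝ),
    IsCorrespondence β γ n c ∧ x = alphaDistortion a β γ n c}

end IntervalPartition

/-- A point of the space `J`: an interval partition `η` together with an increasing,
right-continuous function `f` that is constant on every block of `η`, on `[‖η‖, ∞)`,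
and (as `f` is defined on `[0, ∞]`) on `(-∞, 0]`. -/
structure JPoint where
  part : IntervalPartition
  f : ℝ → ℝ
  f_nonneg : ∀ t, 0 ≤ f t
  f_mono : Monotone f
  f_rightCont : ∀ t, ContinuousWithinAt f (Set.Ici t) t
  f_const_block : ∀ p ∈ part.blocks, ∀ s ∈ Set.Ioo p.1 p.2, ∀ t ∈ Set.Ioo p.1 p.2, f s = f t
  f_const_top : ∀ t, part.length ≤ t → f t = f part.length
  f_const_neg : ∀ t, t ≤ (0:ℝ) → f t = f 0

/-- The distortion of a correspondence between two points of `J`: as the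
`a`-distortion, but with `f`, `g` in place of the diversity functions. -/
noncomputable def jDistortion (x y : JPoint) (n : ℕ)
    (c : Fin n → (ℝ × ℝ) × (ℝ × ℝ)) : ℝ :=
  max (IntervalPartition.hausDistortion x.part y.part n c)
    (max (⨆ j : Fin n, |x.f (((c j).1.1 + (c j).1.2) / 2) - y.f (((c j).2.1 + (c j).2.2) / 2)|)
         |x.f x.part.length - y.f y.part.length|)

/-- The metric `d_J` on `J`. -/
noncomputable def dJ (x y : JPoint) : ℝ :=
  sInf {r | ∃ n, ∃ c : Fin n → (ℝ × ℝ) × (ℝ × ℝ),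
    IntervalPartition.IsCorrespondence x.part y.part n c ∧ r = jDistortion x y n c}

open IntervalPartition

/-! ### Masses of finite families of blocks -/

lemma mass_pos {β : IntervalPartition} {p : ℝ × ℝ} (hp : p ∈ β.blocks) : 0 < mass p :=
  sub_pos.2 (β.blocks_lt p hp)

/-- Two blocks with a common point coincide. -/
lemma block_eq_of_mem {β : IntervalPartition} {p q : ℝ × ℝ} (hp : p ∈ β.blocks)
    (hq : q ∈ β.blocks) {t : ℝ} (h1 : t ∈ Ioo p.1 p.2) (h2 : t ∈ Ioo q.1 q.2) : p = q := by
  by_contra hne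
  have h : t ∈ Ioo p.1 p.2 ∩ Ioo q.1 q.2 := ⟨h1, h2⟩
  rw [β.blocks_disjoint p hp q hq hne] at h
  exact h

lemma blocks_pairwiseDisjoint (β : IntervalPartition) :
    β.blocks.PairwiseDisjoint (fun p : ℝ × ℝ => Ioo p.1 p.2) := by
  intro p hp q hq hne
  exact disjoint_iff_inter_eq_empty.2 (β.blocks_disjoint p hp q hq hne)

/-- Finitely many blocks contained in `[A, B]` have total mass at most `B - A`. -/
lemma sum_mass_le_of_sub {β : IntervalPartition} {F : Finset (ℝ × ℝ)}
    (hF : ∀ p ∈ F, p ∈ β.blocks) {A B : ℝ} (hAB : A ≤ B)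
    (hs : ∀ p ∈ F, A ≤ p.1 ∧ p.2 ≤ B) : ∑ p ∈ F, mass p ≤ B - A := by
  have h1 : volume (⋃ p ∈ F, Ioo p.1 p.2) = ∑ p ∈ F, volume (Ioo p.1 p.2) :=
    measure_biUnion_finset ((blocks_pairwiseDisjoint β).subset hF) (fun p _ => measurableSet_Ioo)
  have h2 : volume (⋃ p ∈ F, Ioo p.1 p.2) ≤ volume (Icc A B) := by
    apply measure_mono
    intro t ht
    simp only [mem_iUnion] at ht
    obtain ⟨p, hp, ht⟩ := ht
    exact ⟨(hs p hp).1.trans ht.1.le, ht.2.le.trans (hs p hp).2⟩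
  rw [h1, Real.volume_Icc] at h2
  simp only [Real.volume_Ioo] at h2
  change ∑ p ∈ F, ENNReal.ofReal (mass p) ≤ _ at h2
  rw [← ENNReal.ofReal_sum_of_nonneg (fun p hp => (mass_pos (hF p hp)).le)] at h2
  exact (ENNReal.ofReal_le_ofReal_iff (sub_nonneg.2 hAB)).1 h2

lemma sum_mass_le {β : IntervalPartition} {F : Finset (ℝ × ℝ)}
    (hF : ∀ p ∈ F, p ∈ β.blocks) : ∑ p ∈ F, mass p ≤ β.length := by
  simpa using sum_mass_le_of_sub hF β.length_nonneg (fun p hp => β.blocks_sub p (hF p hp))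

/-- Version of `sum_mass_le_of_sub` for an injectively indexed family of blocks. -/
lemma sum_mass_le_of_injOn {β : IntervalPartition} {ι : Type*} {S : Finset ι} {u : ι → ℝ × ℝ}
    (hu : ∀ i ∈ S, u i ∈ β.blocks) (hinj : Set.InjOn u S) {A B : ℝ} (hAB : A ≤ B)
    (hs : ∀ i ∈ S, A ≤ (u i).1 ∧ (u i).2 ≤ B) : ∑ i ∈ S, mass (u i) ≤ B - A := by
  rw [← Finset.sum_image (f := mass) hinj]
  apply sum_mass_le_of_sub (β := β) _ hAB
  · simpa only [Finset.forall_mem_image] using hs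
  · simpa only [Finset.forall_mem_image] using hu

/-- Finitely many blocks exhaust the length up to an arbitrarily small error. -/
lemma exists_finset_blocks (β : IntervalPartition) {ε : ℝ} (hε : 0 < ε) :
    ∃ F : Finset (ℝ × ℝ), (∀ p ∈ F, p ∈ β.blocks) ∧ β.length - ∑ p ∈ F, mass p ≤ ε := by
  rcases β.length_nonneg.eq_or_lt with h0 | hpos
  · exact ⟨∅, by simp, by simp [← h0, hε.le]⟩
  have hc : β.blocks.Countable :=
    (blocks_pairwiseDisjoint β).countable_of_isOpen (fun p _ => isOpen_Ioo)
      (fun p hp => nonempty_Ioo.2 (β.blocks_lt p hp))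
  have h1 : ENNReal.ofReal β.length ≤ ∑' p : β.blocks, volume (Ioo p.1.1 p.1.2) := by
    rw [← measure_biUnion hc (blocks_pairwiseDisjoint β) (fun p _ => measurableSet_Ioo)]
    calc ENNReal.ofReal β.length = volume (Icc 0 β.length) := by simp
      _ ≤ volume ((Icc 0 β.length \ ⋃ p ∈ β.blocks, Ioo p.1 p.2) ∪
            ⋃ p ∈ β.blocks, Ioo p.1 p.2) := by
          apply measure_mono
          rw [sdiff_union_self]
          exact subset_union_left
      _ ≤ _ := (measure_union_le _ _).trans (by rw [β.compl_null, zero_add])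
  have h2 : ENNReal.ofReal (β.length - ε) < ENNReal.ofReal β.length :=
    (ENNReal.ofReal_lt_ofReal_iff hpos).2 (by linarith)
  have h3 := h2.trans_le h1
  rw [ENNReal.tsum_eq_iSup_sum, lt_iSup_iff] at h3
  obtain ⟨G, hG⟩ := h3
  have hinj : Set.InjOn (Subtype.val : β.blocks → ℝ × ℝ) G := Subtype.val_injective.injOn
  refine ⟨G.image Subtype.val, ?_, ?_⟩
  · intro p hp
    obtain ⟨q, -, rfl⟩ := Finset.mem_image.1 hp
    exact q.2
  · rw [Finset.sum_image hinj]
    simp only [Real.volume_Ioo] at hG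
    change _ < ∑ p ∈ G, ENNReal.ofReal (mass p.1) at hG
    rw [← ENNReal.ofReal_sum_of_nonneg (fun p _ => (mass_pos p.2).le)] at hG
    have h4 := lt_of_not_ge fun hle => hG.not_ge (ENNReal.ofReal_le_ofReal hle)
    linarith

/-! ### Correspondences as finite sets of pairs -/

/-- A correspondence between `β` and `γ`, given by its finite set of matched pairs: any two distinct
pairs are ordered in the same way in both coordinates. -/
structure IsFinCorr (β γ : IntervalPartition) (S : Finset ((ℝ × ℝ) × (ℝ × ℝ))) : Prop where
  left : ∀ p ∈ S, p.1 ∈ β.blocks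
  right : ∀ p ∈ S, p.2 ∈ γ.blocks
  order : ∀ p ∈ S, ∀ q ∈ S, p = q ∨ (p.1.2 ≤ q.1.1 ∧ p.2.2 ≤ q.2.1) ∨
    (q.1.2 ≤ p.1.1 ∧ q.2.2 ≤ p.2.1)

/-- Some correspondence between `x` and `y` has distortion at most `r`. -/
def JClose (x y : JPoint) (r : ℝ) : Prop :=
  ∃ S : Finset ((ℝ × ℝ) × (ℝ × ℝ)), IsFinCorr x.part y.part S ∧
    (∑ p ∈ S, |mass p.1 - mass p.2|) + x.part.length - ∑ p ∈ S, mass p.1 ≤ r ∧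
    (∑ p ∈ S, |mass p.1 - mass p.2|) + y.part.length - ∑ p ∈ S, mass p.2 ≤ r ∧
    (∀ p ∈ S, |x.f ((p.1.1 + p.1.2) / 2) - y.f ((p.2.1 + p.2.2) / 2)| ≤ r) ∧
    |x.f x.part.length - y.f y.part.length| ≤ r

lemma IsFinCorr.injOn_fst {β γ : IntervalPartition} {S : Finset ((ℝ × ℝ) × (ℝ × ℝ))}
    (h : IsFinCorr β γ S) : Set.InjOn Prod.fst (S : Set ((ℝ × ℝ) × (ℝ × ℝ))) := by
  intro p hp q hq hpq
  have h1 := β.blocks_lt _ (h.left p hp)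
  rcases h.order p hp q hq with h2 | h2 | h2
  · exact h2
  · rw [← hpq] at h2; linarith [h2.1]
  · rw [← hpq] at h2; linarith [h2.1]

lemma IsFinCorr.injOn_snd {β γ : IntervalPartition} {S : Finset ((ℝ × ℝ) × (ℝ × ℝ))}
    (h : IsFinCorr β γ S) : Set.InjOn Prod.snd (S : Set ((ℝ × ℝ) × (ℝ × ℝ))) := by
  intro p hp q hq hpq
  have h1 := γ.blocks_lt _ (h.right p hp)
  rcases h.order p hp q hq with h2 | h2 | h2
  · exact h2
  · rw [← hpq] at h2; linarith [h2.2]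
  · rw [← hpq] at h2; linarith [h2.2]

lemma jDistortion_nonneg (x y : JPoint) (n : ℕ) (c : Fin n → (ℝ × ℝ) × (ℝ × ℝ)) :
    0 ≤ jDistortion x y n c :=
  (abs_nonneg _).trans ((le_max_right _ _).trans (le_max_right _ _))

lemma dJ_nonneg (x y : JPoint) : 0 ≤ dJ x y := by
  apply Real.sInf_nonneg
  rintro r ⟨n, c, -, rfl⟩
  exact jDistortion_nonneg x y n c

/-- The image of an enumerated correspondence is a finite-set correspondence. -/
lemma jClose_of_dJ_lt {x y : JPoint} {r : ℝ} (h : dJ x y < r) : JClose x y r := by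
  have hne : {r | ∃ n, ∃ c : Fin n → (ℝ × ℝ) × (ℝ × ℝ),
      IsCorrespondence x.part y.part n c ∧ r = jDistortion x y n c}.Nonempty :=
    ⟨_, 0, Fin.elim0, ⟨fun j => j.elim0, fun j => j.elim0⟩, rfl⟩
  obtain ⟨_, ⟨n, c, hc, rfl⟩, hlt⟩ := exists_lt_of_csInf_lt hne h
  have hinj : Function.Injective c := by
    intro j k hjk
    by_contra hne
    rcases lt_or_gt_of_ne hne with hl | hl
    · have h1 := (hc.2 j k hl).1
      rw [hjk] at h1
      linarith [x.part.blocks_lt _ (hc.1 k).1]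
    · have h1 := (hc.2 k j hl).1
      rw [hjk] at h1
      linarith [x.part.blocks_lt _ (hc.1 k).1]
  have hsum : ∀ g : (ℝ × ℝ) × (ℝ × ℝ) → ℝ, ∑ p ∈ Finset.univ.image c, g p = ∑ j, g (c j) :=
    fun g => Finset.sum_image hinj.injOn
  have hle := hlt.le
  unfold jDistortion hausDistortion at hle
  rw [max_le_iff, max_le_iff, max_le_iff] at hle
  obtain ⟨⟨h1, h2⟩, h3, h4⟩ := hle
  refine ⟨Finset.univ.image c, ⟨?_, ?_, ?_⟩, ?_, ?_, ?_, h4⟩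
  · simpa using fun j => (hc.1 j).1
  · simpa using fun j => (hc.1 j).2
  · simp only [Finset.forall_mem_image, Finset.mem_univ, forall_true_left]
    intro j k
    rcases lt_trichotomy j k with hl | hl | hl
    · exact Or.inr (Or.inl (hc.2 j k hl))
    · exact Or.inl (by rw [hl])
    · exact Or.inr (Or.inr (hc.2 k j hl))
  · simpa only [hsum] using h1
  · simpa only [hsum] using h2
  · simp only [Finset.forall_mem_image, Finset.mem_univ, forall_true_left]
    intro j
    exact (le_ciSup (f := fun j : Fin n => |x.f (((c j).1.1 + (c j).1.2) / 2) -
      y.f (((c j).2.1 + (c j).2.2) / 2)|) (Set.finite_range _).bddAbove j).trans h3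

/-- A finite-set correspondence can be enumerated in increasing order of the left endpoints of its
first blocks. -/
lemma IsFinCorr.exists_enum {β γ : IntervalPartition} {S : Finset ((ℝ × ℝ) × (ℝ × ℝ))}
    (h : IsFinCorr β γ S) : ∃ n, ∃ c : Fin n → (ℝ × ℝ) × (ℝ × ℝ),
      IsCorrespondence β γ n c ∧ Function.Injective c ∧ Finset.univ.image c = S := by
  set A : Finset ℝ := S.image (fun p => p.1.1)
  set e := A.orderEmbOfFin rfl
  have hex : ∀ j, ∃ p ∈ S, p.1.1 = e j := fun j =>
    Finset.mem_image.1 (A.orderEmbOfFin_mem rfl j)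
  choose c hcS hce using hex
  have hinj : Function.Injective c := by
    intro j k hjk
    apply e.injective
    rw [← hce, ← hce, hjk]
  refine ⟨_, c, ⟨fun j => ⟨h.left _ (hcS j), h.right _ (hcS j)⟩, ?_⟩, hinj, ?_⟩
  · intro j k hjk
    have hlt : e j < e k := e.lt_iff_lt.2 hjk
    rcases h.order _ (hcS j) _ (hcS k) with h2 | h2 | h2
    · exact absurd (hinj h2) hjk.ne
    · exact h2
    · have := β.blocks_lt _ (h.left _ (hcS k))
      rw [← hce, ← hce] at hlt
      linarith [h2.1]
  · ext p
    simp only [Finset.mem_image, Finset.mem_univ, true_and]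
    constructor
    · rintro ⟨j, rfl⟩
      exact hcS j
    · intro hp
      have hpA : p.1.1 ∈ Set.range e := by
        rw [Finset.range_orderEmbOfFin]
        exact Finset.mem_coe.2 (Finset.mem_image_of_mem _ hp)
      obtain ⟨j, hj⟩ := hpA
      refine ⟨j, ?_⟩
      have hj' : (c j).1.1 = p.1.1 := (hce j).trans hj
      have h3 := β.blocks_lt _ (h.left _ (hcS j))
      have h4 := β.blocks_lt _ (h.left _ hp)
      rcases h.order _ (hcS j) _ hp with h2 | h2 | h2
      · exact h2
      · linarith [h2.1]
      · linarith [h2.1]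

lemma dJ_le_of_jClose {x y : JPoint} {r : ℝ} (h : JClose x y r) : dJ x y ≤ r := by
  obtain ⟨S, hS, h1, h2, h3, h4⟩ := h
  obtain ⟨n, c, hc, hinj, rfl⟩ := hS.exists_enum
  have hsum : ∀ g : (ℝ × ℝ) × (ℝ × ℝ) → ℝ, ∑ p ∈ Finset.univ.image c, g p = ∑ j, g (c j) :=
    fun g => Finset.sum_image hinj.injOn
  simp only [hsum] at h1 h2
  have hle : dJ x y ≤ jDistortion x y n c := by
    refine csInf_le ⟨0, ?_⟩ ⟨n, c, hc, rfl⟩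
    rintro _ ⟨n, c, -, rfl⟩
    exact jDistortion_nonneg x y n c
  · refine hle.trans ?_
    unfold jDistortion hausDistortion
    refine max_le (max_le h1 h2) (max_le (Real.iSup_le (fun j => ?_) ((abs_nonneg _).trans h4)) h4)
    exact h3 _ (Finset.mem_image_of_mem _ (Finset.mem_univ j))

/-! ### Symmetry and reflexivity -/

lemma JClose.symm {x y : JPoint} {r : ℝ} (h : JClose x y r) : JClose y x r := by
  obtain ⟨S, hS, h1, h2, h3, h4⟩ := h
  have hsum : ∀ g : (ℝ × ℝ) × (ℝ × ℝ) → ℝ,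
      ∑ p ∈ S.image Prod.swap, g p = ∑ p ∈ S, g p.swap :=
    fun g => Finset.sum_image Prod.swap_injective.injOn
  refine ⟨S.image Prod.swap, ⟨?_, ?_, ?_⟩, ?_, ?_, ?_, ?_⟩
  · simp only [Finset.forall_mem_image]
    exact hS.right
  · simp only [Finset.forall_mem_image]
    exact hS.left
  · simp only [Finset.forall_mem_image]
    intro p hp q hq
    rcases hS.order p hp q hq with h | h | h
    · exact Or.inl (by rw [h])
    · exact Or.inr (Or.inl h.symm)
    · exact Or.inr (Or.inr h.symm)
  · simpa only [hsum, Prod.fst_swap, Prod.snd_swap, abs_sub_comm] using h2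
  · simpa only [hsum, Prod.fst_swap, Prod.snd_swap, abs_sub_comm] using h1
  · simp only [Finset.forall_mem_image]
    intro p hp
    rw [abs_sub_comm]
    exact h3 p hp
  · rw [abs_sub_comm]
    exact h4

lemma jClose_self (x : JPoint) {ε : ℝ} (hε : 0 < ε) : JClose x x ε := by
  obtain ⟨F, hF, hFε⟩ := exists_finset_blocks x.part hε
  have hinj : Function.Injective (fun p : ℝ × ℝ => (p, p)) := fun p q h => (Prod.ext_iff.1 h).1
  have hsum : ∀ g : (ℝ × ℝ) × (ℝ × ℝ) → ℝ,
      ∑ p ∈ F.image (fun p => (p, p)), g p = ∑ p ∈ F, g (p, p) :=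
    fun g => Finset.sum_image hinj.injOn
  refine ⟨F.image (fun p => (p, p)), ⟨?_, ?_, ?_⟩, ?_, ?_, ?_, ?_⟩
  · simpa only [Finset.forall_mem_image] using hF
  · simpa only [Finset.forall_mem_image] using hF
  · simp only [Finset.forall_mem_image]
    intro p hp q hq
    by_cases hpq : p = q
    · exact Or.inl (by rw [hpq])
    have hd := x.part.blocks_disjoint p (hF p hp) q (hF q hq) hpq
    have h1 := x.part.blocks_lt p (hF p hp)
    have h2 := x.part.blocks_lt q (hF q hq)
    rw [Ioo_inter_Ioo, Ioo_eq_empty_iff, not_lt, inf_le_iff, le_sup_iff, le_sup_iff] at hd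
    rcases hd with (h | h) | (h | h)
    · linarith
    · exact Or.inr (Or.inl ⟨h, h⟩)
    · exact Or.inr (Or.inr ⟨h, h⟩)
    · linarith
  · simpa [hsum] using hFε
  · simpa [hsum] using hFε
  · simp only [Finset.forall_mem_image]
    intro p _
    simpa using hε.le
  · simpa using hε.le

/-! ### Triangle inequality -/

/-- The mass estimate for a composition. Families `u, v` (over `S`) and `v', w` (over `S'`) are
matched with each other, `K` is the set of index pairs with `v i = v' j`, and `v`, `v'` consist of
blocks of `β`. -/
lemma compose_sum_le {β : IntervalPartition} {ι κ : Type*} {S : Finset ι} {S' : Finset κ}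
    {K : Finset (ι × κ)} {u v : ι → ℝ × ℝ} {v' w : κ → ℝ × ℝ}
    (hK : ∀ q, q ∈ K ↔ q.1 ∈ S ∧ q.2 ∈ S' ∧ v q.1 = v' q.2)
    (hv : ∀ i ∈ S, v i ∈ β.blocks) (hv' : ∀ j ∈ S', v' j ∈ β.blocks)
    (hvi : Set.InjOn v S) (hvi' : Set.InjOn v' S') :
    (∑ q ∈ K, |mass (u q.1) - mass (w q.2)|) - ∑ q ∈ K, mass (u q.1) ≤
      ((∑ i ∈ S, |mass (u i) - mass (v i)|) - ∑ i ∈ S, mass (u i)) +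
      ((∑ j ∈ S', |mass (v' j) - mass (w j)|) + β.length - ∑ j ∈ S', mass (v' j)) := by
  classical
  have hfst : Set.InjOn Prod.fst (K : Set (ι × κ)) := by
    intro p hp q hq hpq
    obtain ⟨-, hp2, hp3⟩ := (hK p).1 hp
    obtain ⟨-, hq2, hq3⟩ := (hK q).1 hq
    exact Prod.ext hpq (hvi' hp2 hq2 (by rw [← hp3, ← hq3, hpq]))
  have hsnd : Set.InjOn Prod.snd (K : Set (ι × κ)) := by
    intro p hp q hq hpq
    obtain ⟨hp2, -, hp3⟩ := (hK p).1 hp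
    obtain ⟨hq2, -, hq3⟩ := (hK q).1 hq
    exact Prod.ext (hvi hp2 hq2 (by rw [hp3, hq3, hpq])) hpq
  set I := K.image Prod.fst with hI
  have hIS : I ⊆ S := by
    intro i hi
    obtain ⟨q, hq, rfl⟩ := Finset.mem_image.1 hi
    exact ((hK q).1 hq).1
  have hJS : K.image Prod.snd ⊆ S' := by
    intro i hi
    obtain ⟨q, hq, rfl⟩ := Finset.mem_image.1 hi
    exact ((hK q).1 hq).2.1
  have h1 : ∑ q ∈ K, |mass (u q.1) - mass (w q.2)| ≤
      ∑ q ∈ K, |mass (u q.1) - mass (v q.1)| + ∑ q ∈ K, |mass (v' q.2) - mass (w q.2)| := by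
    rw [← Finset.sum_add_distrib]
    apply Finset.sum_le_sum
    intro q hq
    rw [((hK q).1 hq).2.2]
    exact abs_sub_le _ _ _
  have h2 : ∑ q ∈ K, |mass (u q.1) - mass (v q.1)| = ∑ i ∈ I, |mass (u i) - mass (v i)| :=
    (Finset.sum_image (f := fun i => |mass (u i) - mass (v i)|) hfst).symm
  have h3 : ∑ q ∈ K, mass (u q.1) = ∑ i ∈ I, mass (u i) :=
    (Finset.sum_image (f := fun i => mass (u i)) hfst).symm
  have h4 : ∑ q ∈ K, |mass (v' q.2) - mass (w q.2)| ≤ ∑ j ∈ S', |mass (v' j) - mass (w j)| := by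
    rw [← Finset.sum_image (f := fun j => |mass (v' j) - mass (w j)|) hsnd]
    exact Finset.sum_le_sum_of_subset_of_nonneg hJS (fun _ _ _ => abs_nonneg _)
  have h5 := Finset.sum_sdiff (f := fun i => |mass (u i) - mass (v i)|) hIS
  have h6 := Finset.sum_sdiff (f := fun i => mass (u i)) hIS
  have h7 : ∑ i ∈ S \ I, mass (u i) ≤
      ∑ i ∈ S \ I, |mass (u i) - mass (v i)| + ∑ i ∈ S \ I, mass (v i) := by
    rw [← Finset.sum_add_distrib]
    apply Finset.sum_le_sum
    intro i _
    linarith [le_abs_self (mass (u i) - mass (v i))]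
  have h8 : ∑ i ∈ S \ I, mass (v i) + ∑ j ∈ S', mass (v' j) ≤ β.length := by
    have hd : Disjoint ((S \ I).image v) (S'.image v') := by
      rw [Finset.disjoint_left]
      intro p hp hp'
      obtain ⟨i, hi, rfl⟩ := Finset.mem_image.1 hp
      obtain ⟨j, hj, hij⟩ := Finset.mem_image.1 hp'
      obtain ⟨hiS, hiI⟩ := Finset.mem_sdiff.1 hi
      exact hiI (Finset.mem_image.2 ⟨(i, j), (hK _).2 ⟨hiS, hj, hij.symm⟩, rfl⟩)
    rw [← Finset.sum_image (f := mass) (g := v') hvi',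
      ← Finset.sum_image (f := mass) (g := v)
        (hvi.mono (Finset.coe_subset.2 Finset.sdiff_subset)), ← Finset.sum_union hd]
    apply sum_mass_le
    intro p hp
    rcases Finset.mem_union.1 hp with hp | hp
    · obtain ⟨i, hi, rfl⟩ := Finset.mem_image.1 hp
      exact hv i (Finset.mem_sdiff.1 hi).1
    · obtain ⟨j, hj, rfl⟩ := Finset.mem_image.1 hp
      exact hv' j hj
  linarith

lemma JClose.trans {x y z : JPoint} {r s : ℝ} (h : JClose x z r) (h' : JClose z y s) :
    JClose x y (r + s) := by
  obtain ⟨S, hS, h1, h2, h3, h4⟩ := h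
  obtain ⟨S', hS', h1', h2', h3', h4'⟩ := h'
  set K := (S ×ˢ S').filter (fun q => q.1.2 = q.2.1) with hKdef
  have hK : ∀ q, q ∈ K ↔ q.1 ∈ S ∧ q.2 ∈ S' ∧ q.1.2 = q.2.1 := by
    intro q
    rw [hKdef, Finset.mem_filter, Finset.mem_product, and_assoc]
  have hinj : Set.InjOn (fun q : ((ℝ × ℝ) × (ℝ × ℝ)) × ((ℝ × ℝ) × (ℝ × ℝ)) => (q.1.1, q.2.2))
      K := by
    intro p hp q hq hpq
    obtain ⟨hp1, hp2, -⟩ := (hK p).1 hp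
    obtain ⟨hq1, hq2, -⟩ := (hK q).1 hq
    obtain ⟨e1, e2⟩ := Prod.ext_iff.1 hpq
    exact Prod.ext (hS.injOn_fst hp1 hq1 e1) (hS'.injOn_snd hp2 hq2 e2)
  have hsum : ∀ g : (ℝ × ℝ) × (ℝ × ℝ) → ℝ,
      ∑ p ∈ K.image (fun q => (q.1.1, q.2.2)), g p = ∑ q ∈ K, g (q.1.1, q.2.2) :=
    fun g => Finset.sum_image hinj
  refine ⟨K.image (fun q => (q.1.1, q.2.2)), ⟨?_, ?_, ?_⟩, ?_, ?_, ?_, ?_⟩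
  · simp only [Finset.forall_mem_image]
    exact fun q hq => hS.left _ ((hK q).1 hq).1
  · simp only [Finset.forall_mem_image]
    exact fun q hq => hS'.right _ ((hK q).1 hq).2.1
  · simp only [Finset.forall_mem_image]
    intro p hp q hq
    obtain ⟨hp1, hp2, hp3⟩ := (hK p).1 hp
    obtain ⟨hq1, hq2, hq3⟩ := (hK q).1 hq
    have lp := z.part.blocks_lt _ (hS.right _ hp1)
    have lq := z.part.blocks_lt _ (hS.right _ hq1)
    -- The common middle blocks force both correspondences to order `p` and `q` in the same way.
    rcases hS.order _ hp1 _ hq1 with e | e | e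
    · left
      have : p.2 = q.2 := hS'.injOn_fst hp2 hq2 (by rw [← hp3, ← hq3, e])
      rw [e, this]
    · rcases hS'.order _ hp2 _ hq2 with e' | e' | e'
      · rw [hp3, hq3, e'] at e
        rw [hq3] at lq
        linarith [e.2]
      · exact Or.inr (Or.inl ⟨e.1, e'.2⟩)
      · rw [← hp3, ← hq3] at e'
        linarith [e.2, e'.1]
    · rcases hS'.order _ hp2 _ hq2 with e' | e' | e'
      · rw [hp3, hq3, e'] at e
        rw [hq3] at lq
        linarith [e.2]
      · rw [← hp3, ← hq3] at e'
        linarith [e.2, e'.1]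
      · exact Or.inr (Or.inr ⟨e.1, e'.2⟩)
  · simp only [hsum]
    have := compose_sum_le (u := Prod.fst) (v := Prod.snd) (v' := Prod.fst) (w := Prod.snd)
      hK hS.right hS'.left hS.injOn_snd hS'.injOn_fst
    linarith
  · simp only [hsum]
    have hK' : ∀ q, q ∈ K.image Prod.swap ↔ q.1 ∈ S' ∧ q.2 ∈ S ∧ q.1.1 = q.2.2 := by
      intro q
      rw [Finset.mem_image]
      constructor
      · rintro ⟨p, hp, rfl⟩
        obtain ⟨a, b, c⟩ := (hK p).1 hp
        exact ⟨b, a, c.symm⟩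
      · rintro ⟨a, b, c⟩
        exact ⟨q.swap, (hK _).2 ⟨b, a, c.symm⟩, Prod.swap_swap q⟩
    have := compose_sum_le (u := Prod.snd) (v := Prod.fst) (v' := Prod.snd) (w := Prod.fst)
      hK' hS'.left hS.right hS'.injOn_fst hS.injOn_snd
    rw [Finset.sum_image Prod.swap_injective.injOn, Finset.sum_image Prod.swap_injective.injOn]
      at this
    simp only [Prod.fst_swap, Prod.snd_swap] at this
    simp only [abs_sub_comm (mass (Prod.snd _)) (mass (Prod.fst _))] at this
    linarith
  · simp only [Finset.forall_mem_image]
    intro q hq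
    obtain ⟨hq1, hq2, hq3⟩ := (hK q).1 hq
    have a := h3 _ hq1
    have b := h3' _ hq2
    rw [← hq3] at b
    exact (abs_sub_le _ _ _).trans (add_le_add a b)
  · exact (abs_sub_le _ _ _).trans (add_le_add h4 h4')

/-! ### Separation -/

/-- If the distortion is below the mass of a block `U`, then `U` is matched, and its partner has
nearly the same endpoints. -/
lemma exists_close_block {x y : JPoint} {ε : ℝ} (h : JClose x y ε) {U : ℝ × ℝ}
    (hU : U ∈ x.part.blocks) (hε : ε < mass U) :
    ∃ V ∈ y.part.blocks, |U.1 - V.1| ≤ ε ∧ |U.2 - V.2| ≤ ε ∧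
      |x.f ((U.1 + U.2) / 2) - y.f ((V.1 + V.2) / 2)| ≤ ε := by
  obtain ⟨S, hS, h1, h2, h3, -⟩ := h
  have hex : ∃ p ∈ S, p.1 = U := by
    by_contra! hno
    have hnot : U ∉ S.image Prod.fst := by
      intro hmem
      obtain ⟨p, hp, hpU⟩ := Finset.mem_image.1 hmem
      exact hno p hp hpU
    have hle := sum_mass_le (β := x.part) (F := insert U (S.image Prod.fst)) (by
      simp only [Finset.forall_mem_insert, Finset.forall_mem_image]
      exact ⟨hU, hS.left⟩)
    rw [Finset.sum_insert hnot, Finset.sum_image hS.injOn_fst] at hle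
    have h0 : 0 ≤ ∑ p ∈ S, |mass p.1 - mass p.2| := Finset.sum_nonneg fun _ _ => abs_nonneg _
    linarith
  obtain ⟨p, hp, rfl⟩ := hex
  have lU := x.part.blocks_lt _ hU
  have lV := y.part.blocks_lt _ (hS.right p hp)
  have sU := x.part.blocks_sub _ hU
  have sV := y.part.blocks_sub _ (hS.right p hp)
  refine ⟨p.2, hS.right p hp, ?_⟩
  -- `SL` and `SR` are the pairs to the left and to the right of `p`.
  set SL := S.filter (fun q => q.1.2 ≤ p.1.1 ∧ q.2.2 ≤ p.2.1) with hSL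
  set SR := S.filter (fun q => p.1.2 ≤ q.1.1 ∧ p.2.2 ≤ q.2.1) with hSR
  have split : ∀ g : (ℝ × ℝ) × (ℝ × ℝ) → ℝ,
      ∑ q ∈ S, g q = ∑ q ∈ SL, g q + g p + ∑ q ∈ SR, g q := by
    intro g
    have hpS : g p = ∑ q ∈ S, if q = p then g q else 0 := by
      rw [Finset.sum_ite_eq' S p g, if_pos hp]
    rw [hpS, hSL, hSR, Finset.sum_filter, Finset.sum_filter, ← Finset.sum_add_distrib,
      ← Finset.sum_add_distrib]
    apply Finset.sum_congr rfl
    intro q hq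
    have lq := x.part.blocks_lt _ (hS.left q hq)
    rcases hS.order q hq p hp with e | e | e
    · subst e
      have hn : ¬ (q.1.2 ≤ q.1.1 ∧ q.2.2 ≤ q.2.1) := fun e => by linarith [e.1]
      simp [hn]
    · rw [if_pos e, if_neg (fun e' => by rw [e'] at e; linarith [e.1]),
        if_neg (fun e' => by linarith [e.1, e'.1])]
      ring
    · rw [if_neg (fun e' => by linarith [e.1, e'.1]),
        if_neg (fun e' => by rw [e'] at e; linarith [e.1]), if_pos e]
      ring
  have cL : (SL : Set ((ℝ × ℝ) × (ℝ × ℝ))) ⊆ S := Finset.coe_subset.2 (Finset.filter_subset _ _)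
  have cR : (SR : Set ((ℝ × ℝ) × (ℝ × ℝ))) ⊆ S := Finset.coe_subset.2 (Finset.filter_subset _ _)
  have b1 : ∑ q ∈ SL, mass q.1 ≤ p.1.1 - 0 :=
    sum_mass_le_of_injOn (fun q hq => hS.left q (cL hq)) (hS.injOn_fst.mono cL) sU.1
      (fun q hq => ⟨(x.part.blocks_sub _ (hS.left q (cL hq))).1, (Finset.mem_filter.1 hq).2.1⟩)
  have b2 : ∑ q ∈ SR, mass q.1 ≤ x.part.length - p.1.2 :=
    sum_mass_le_of_injOn (fun q hq => hS.left q (cR hq)) (hS.injOn_fst.mono cR) sU.2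
      (fun q hq => ⟨(Finset.mem_filter.1 hq).2.1, (x.part.blocks_sub _ (hS.left q (cR hq))).2⟩)
  have b3 : ∑ q ∈ SL, mass q.2 ≤ p.2.1 - 0 :=
    sum_mass_le_of_injOn (fun q hq => hS.right q (cL hq)) (hS.injOn_snd.mono cL) sV.1
      (fun q hq => ⟨(y.part.blocks_sub _ (hS.right q (cL hq))).1, (Finset.mem_filter.1 hq).2.2⟩)
  have b4 : ∑ q ∈ SR, mass q.2 ≤ y.part.length - p.2.2 :=
    sum_mass_le_of_injOn (fun q hq => hS.right q (cR hq)) (hS.injOn_snd.mono cR) sV.2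
      (fun q hq => ⟨(Finset.mem_filter.1 hq).2.2, (y.part.blocks_sub _ (hS.right q (cR hq))).2⟩)
  have dL : |∑ q ∈ SL, mass q.1 - ∑ q ∈ SL, mass q.2| ≤ ∑ q ∈ SL, |mass q.1 - mass q.2| := by
    rw [← Finset.sum_sub_distrib]
    exact Finset.abs_sum_le_sum_abs _ _
  have dR : 0 ≤ ∑ q ∈ SR, |mass q.1 - mass q.2| := Finset.sum_nonneg fun _ _ => abs_nonneg _
  have dp : |mass p.1 - mass p.2| ≤ |mass p.1 - mass p.2| := le_rfl
  have dp0 : 0 ≤ |mass p.1 - mass p.2| := abs_nonneg _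
  rw [split (fun q => |mass q.1 - mass q.2|), split (fun q => mass q.1)] at h1
  rw [split (fun q => |mass q.1 - mass q.2|), split (fun q => mass q.2)] at h2
  have mU : mass p.1 = p.1.2 - p.1.1 := rfl
  have mV : mass p.2 = p.2.2 - p.2.1 := rfl
  have dL' := abs_le.1 dL
  have dp' := abs_le.1 dp
  refine ⟨abs_le.2 ⟨?_, ?_⟩, abs_le.2 ⟨?_, ?_⟩, h3 p hp⟩ <;> linarith

/-- At distance zero, every block of `x` is a block of `y`, with the same function value. -/
lemma block_mem_of_jClose {x y : JPoint} (h : ∀ ε > 0, JClose x y ε) {U : ℝ × ℝ}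
    (hU : U ∈ x.part.blocks) :
    U ∈ y.part.blocks ∧ x.f ((U.1 + U.2) / 2) = y.f ((U.1 + U.2) / 2) := by
  have hm : 0 < mass U := mass_pos hU
  have hmU : mass U = U.2 - U.1 := rfl
  obtain ⟨V, hV, v1, v2, -⟩ := exists_close_block (h (mass U / 4) (by linarith)) hU (by linarith)
  rw [abs_le] at v1 v2
  have key : ∀ δ > 0, |U.1 - V.1| ≤ δ ∧ |U.2 - V.2| ≤ δ ∧
      |x.f ((U.1 + U.2) / 2) - y.f ((V.1 + V.2) / 2)| ≤ δ := by
    intro δ hδ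
    have m1 : min δ (mass U / 4) ≤ δ := min_le_left _ _
    have m2 : min δ (mass U / 4) ≤ mass U / 4 := min_le_right _ _
    obtain ⟨W, hW, w1, w2, w3⟩ := exists_close_block
      (h (min δ (mass U / 4)) (lt_min hδ (by linarith))) hU (by linarith)
    -- Both `V` and `W` contain the midpoint of `U`.
    have hWV : W = V := by
      have w1' := abs_le.1 w1
      have w2' := abs_le.1 w2
      apply block_eq_of_mem hW hV (t := (U.1 + U.2) / 2) <;> constructor <;> linarith
    subst hWV
    exact ⟨w1.trans m1, w2.trans m1, w3.trans m1⟩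
  have e1 : |U.1 - V.1| ≤ 0 := le_of_forall_pos_le_add fun δ hδ => by simpa using (key δ hδ).1
  have e2 : |U.2 - V.2| ≤ 0 := le_of_forall_pos_le_add fun δ hδ => by simpa using (key δ hδ).2.1
  have e3 : |x.f ((U.1 + U.2) / 2) - y.f ((V.1 + V.2) / 2)| ≤ 0 :=
    le_of_forall_pos_le_add fun δ hδ => by simpa using (key δ hδ).2.2
  rw [abs_nonpos_iff, sub_eq_zero] at e1 e2 e3
  have hUV : U = V := Prod.ext e1 e2
  rw [← hUV] at hV e3
  exact ⟨hV, e3⟩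

lemma length_le_of_jClose {x y : JPoint} {ε : ℝ} (h : JClose x y ε) :
    x.part.length ≤ y.part.length + ε := by
  obtain ⟨S, hS, h1, -⟩ := h
  have a : ∑ p ∈ S, mass p.2 ≤ y.part.length - 0 :=
    sum_mass_le_of_injOn hS.right hS.injOn_snd y.part.length_nonneg
      (fun q hq => y.part.blocks_sub _ (hS.right q hq))
  have b : ∑ p ∈ S, mass p.1 ≤ ∑ p ∈ S, |mass p.1 - mass p.2| + ∑ p ∈ S, mass p.2 := by
    rw [← Finset.sum_add_distrib]
    apply Finset.sum_le_sum
    intro p _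
    linarith [le_abs_self (mass p.1 - mass p.2)]
  linarith

/-- The union of the blocks is dense in `[0, ‖β‖]`, from the right. -/
lemma exists_block_between (β : IntervalPartition) {t s : ℝ} (ht : 0 ≤ t) (hts : t < s)
    (hs : s ≤ β.length) : ∃ r ∈ Ioo t s, ∃ p ∈ β.blocks, r ∈ Ioo p.1 p.2 := by
  by_contra! hno
  have hsub : Ioo t s ⊆ Icc 0 β.length \ ⋃ p ∈ β.blocks, Ioo p.1 p.2 := by
    intro r hr
    refine ⟨⟨ht.trans hr.1.le, hr.2.le.trans hs⟩, ?_⟩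
    simp only [mem_iUnion, not_exists]
    exact fun p hp => hno r hr p hp
  have h0 := measure_mono_null hsub β.compl_null
  rw [Real.volume_Ioo, ENNReal.ofReal_eq_zero] at h0
  linarith

/-- Right-continuous functions that agree on the blocks agree on `[0, ‖β‖)`. -/
lemma eq_of_eq_on_blocks {β : IntervalPartition} {f g : ℝ → ℝ} {t : ℝ}
    (hf : ContinuousWithinAt f (Ici t) t) (hg : ContinuousWithinAt g (Ici t) t)
    (hfg : ∀ p ∈ β.blocks, ∀ s ∈ Ioo p.1 p.2, f s = g s) (h0 : 0 ≤ t) (hL : t < β.length) :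
    f t = g t := by
  have hfr : ∃ᶠ s in 𝓝[>] t, f s - g s = 0 := by
    rw [Filter.frequently_iff]
    intro A hA
    obtain ⟨u, hu, huA⟩ := (mem_nhdsGT_iff_exists_Ioo_subset' hL).1 hA
    obtain ⟨r, hr, p, hp, hrp⟩ := exists_block_between β h0 (lt_min hu hL) (min_le_right _ _)
    exact ⟨r, huA ⟨hr.1, hr.2.trans_le (min_le_left _ _)⟩, sub_eq_zero.2 (hfg p hp r hrp)⟩
  have hlim : Tendsto (fun s => f s - g s) (𝓝[>] t) (𝓝 (f t - g t)) :=
    (hf.sub hg).mono_left (nhdsWithin_mono t Ioi_subset_Ici_self)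
  have hmem : f t - g t ∈ ({0} : Set ℝ) := isClosed_singleton.mem_of_frequently_of_tendsto hfr hlim
  exact sub_eq_zero.1 hmem

lemma JPoint.eq_of_data {x y : JPoint} (h1 : x.part.length = y.part.length)
    (h2 : x.part.blocks = y.part.blocks) (h3 : x.f = y.f) : x = y := by
  obtain ⟨⟨l, _, b, _, _, _, _⟩, f, _, _, _, _, _, _⟩ := x
  obtain ⟨⟨l', _, b', _, _, _, _⟩, f', _, _, _, _, _, _⟩ := y
  dsimp only at h1 h2 h3
  subst h1 h2 h3
  rfl

lemma eq_of_jClose {x y : JPoint} (h : ∀ ε > 0, JClose x y ε) : x = y := by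
  have hsymm : ∀ ε > 0, JClose y x ε := fun ε hε => (h ε hε).symm
  have hlen : x.part.length = y.part.length :=
    le_antisymm (le_of_forall_pos_le_add fun ε hε => length_le_of_jClose (h ε hε))
      (le_of_forall_pos_le_add fun ε hε => length_le_of_jClose (hsymm ε hε))
  have hbl : x.part.blocks = y.part.blocks :=
    Set.Subset.antisymm (fun U hU => (block_mem_of_jClose h hU).1)
      (fun U hU => (block_mem_of_jClose hsymm hU).1)
  have hfg : ∀ p ∈ x.part.blocks, ∀ s ∈ Ioo p.1 p.2, x.f s = y.f s := by
    intro p hp s hs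
    have lp := x.part.blocks_lt p hp
    have hmid : (p.1 + p.2) / 2 ∈ Ioo p.1 p.2 := by constructor <;> linarith
    obtain ⟨hpy, hval⟩ := block_mem_of_jClose h hp
    rw [x.f_const_block p hp s hs _ hmid, y.f_const_block p hpy s hs _ hmid, hval]
  have htop : x.f x.part.length = y.f y.part.length := by
    have e : |x.f x.part.length - y.f y.part.length| ≤ 0 := by
      apply le_of_forall_pos_le_add
      intro ε hε
      obtain ⟨S, -, -, -, -, h4⟩ := h ε hε
      simpa using h4
    rwa [abs_nonpos_iff, sub_eq_zero] at e
  have hpos : ∀ t, 0 ≤ t → x.f t = y.f t := by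
    intro t ht
    rcases lt_or_ge t x.part.length with hL | hL
    · exact eq_of_eq_on_blocks (x.f_rightCont t) (y.f_rightCont t) hfg ht hL
    · rw [x.f_const_top t hL, y.f_const_top t (hlen ▸ hL), htop]
  refine JPoint.eq_of_data hlen hbl (funext fun t => ?_)
  rcases le_total 0 t with ht | ht
  · exact hpos t ht
  · rw [x.f_const_neg t ht, y.f_const_neg t ht, hpos 0 le_rfl]

/-! ### The metric axioms -/

lemma dJ_le_swap (x y : JPoint) : dJ x y ≤ dJ y x :=
  le_of_forall_gt_imp_ge_of_dense fun _ hr => dJ_le_of_jClose (jClose_of_dJ_lt hr).symm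

/-- `d_J` is a metric on `J`: nonnegative, symmetric, vanishing
precisely when the two pairs are equal, and satisfying the triangle
inequality. -/
theorem dJ_is_metric :
    (∀ x y : JPoint, 0 ≤ dJ x y) ∧
    (∀ x y : JPoint, dJ x y = dJ y x) ∧
    (∀ x y : JPoint, dJ x y = 0 ↔ x = y) ∧
    (∀ x y z : JPoint, dJ x y ≤ dJ x z + dJ z y) := by
  refine ⟨dJ_nonneg, fun x y => le_antisymm (dJ_le_swap x y) (dJ_le_swap y x), ?_, ?_⟩
  · intro x y
    constructor
    · intro h
      exact eq_of_jClose fun ε hε => jClose_of_dJ_lt (h ▸ hε)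
    · rintro rfl
      refine le_antisymm (le_of_forall_pos_le_add fun ε hε => ?_) (dJ_nonneg x x)
      simpa using dJ_le_of_jClose (jClose_self x hε)
  · intro x y z
    apply le_of_forall_pos_le_add
    intro ε hε
    have h1 : JClose x z (dJ x z + ε / 2) := jClose_of_dJ_lt (by linarith)
    have h2 : JClose z y (dJ z y + ε / 2) := jClose_of_dJ_lt (by linarith)
    have h3 := dJ_le_of_jClose (h1.trans h2)
    linarith
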